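/- arXiv:math/0407262 — 2 statements merged into one kernel-verified Lean document; each statement's English description precedes it below -/
import Mathlib

section
/- Let x = (x₁, x̃) ∈ P_β' (i.e., x ∈ P_β with x₁ > 1 and |x̃| < x₁^β/2). Then the open Euclidean ball B(x, |x|^β/5) is contained in P_β. -/
open Metric

/-- The Euclidean norm of the "tail" `x̃ = (x₂, …, x_d)` of a point
`x = (x₁, x̃) ∈ ℝ^d` (here `d = n + 2 ≥ 2`). -/
noncomputable def tailNorm {n : ℕ} (x : EuclideanSpace ℝ (Fin (n + 2))) : ℝ :=
  Real.sqrt (∑ i ∈ Finset.univ.filter (fun i : Fin (n + 2) => i ≠ 0), x i ^ 2)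

/-- The parabola-shaped region `P_β = {x = (x₁, x̃) : x₁ > 0, |x̃| < x₁^β}` in `ℝ^d`,
`d = n + 2 ≥ 2`. -/
def Pbeta (n : ℕ) (β : ℝ) : Set (EuclideanSpace ℝ (Fin (n + 2))) :=
  {x | 0 < x 0 ∧ tailNorm x < x 0 ^ β}

theorem tailNorm_sq_add {n : ℕ} (x : EuclideanSpace ℝ (Fin (n + 2))) :
    ‖x‖ ^ 2 = x 0 ^ 2 + tailNorm x ^ 2 := by
  rw [EuclideanSpace.real_norm_sq_eq, tailNorm,
    Real.sq_sqrt (Finset.sum_nonneg fun i _ => sq_nonneg _),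
    Finset.filter_ne' Finset.univ (0 : Fin (n + 2)),
    Finset.add_sum_erase Finset.univ (fun i => x i ^ 2) (Finset.mem_univ 0)]

theorem tailNorm_nonneg' {n : ℕ} (x : EuclideanSpace ℝ (Fin (n + 2))) : 0 ≤ tailNorm x :=
  Real.sqrt_nonneg _

theorem tailNorm_eq_norm {n : ℕ} (x : EuclideanSpace ℝ (Fin (n + 2))) :
    tailNorm x = ‖x - EuclideanSpace.single 0 (x 0)‖ := by
  rw [EuclideanSpace.norm_eq, tailNorm, Finset.sum_filter]
  congr 1
  refine Finset.sum_congr rfl fun i _ => ?_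
  by_cases h : i = 0
  · subst h; simp
  · simp [h]

theorem tailNorm_le {n : ℕ} (x y : EuclideanSpace ℝ (Fin (n + 2))) :
    tailNorm y ≤ tailNorm x + ‖y - x‖ := by
  have h1 : tailNorm (y - x) ≤ ‖y - x‖ := by
    refine abs_le_of_sq_le_sq' ?_ (norm_nonneg _) |>.2
    rw [tailNorm_sq_add (y - x)]
    nlinarith [sq_nonneg ((y - x) 0)]
  have h2 : tailNorm y ≤ tailNorm x + tailNorm (y - x) := by
    rw [tailNorm_eq_norm, tailNorm_eq_norm, tailNorm_eq_norm]
    refine le_trans (le_of_eq ?_) (norm_add_le _ _)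
    congr 1
    ext i
    by_cases h : i = 0
    · subst h; simp
    · simp [h]
  linarith

/-- If `x ∈ P_β'`, i.e. `x ∈ P_β` with `x₁ > 1` and `|x̃| < x₁^β / 2`, then the open ball
`B(x, |x|^β / 5)` is contained in `P_β`. -/
theorem stmt0 (n : ℕ) (β : ℝ) (hβ0 : 0 < β) (hβ1 : β < 1)
    (x : EuclideanSpace ℝ (Fin (n + 2))) (hx : x ∈ Pbeta n β)
    (hx1 : 1 < x 0) (hxt : tailNorm x < x 0 ^ β / 2) :
    ball x (‖x‖ ^ β / 5) ⊆ Pbeta n β := by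
  intro y hy
  rw [mem_ball, dist_eq_norm] at hy
  have ha : 0 < x 0 := by linarith
  have hA : 0 < x 0 ^ β := Real.rpow_pos_of_pos ha β
  have hAa : x 0 ^ β ≤ x 0 := by
    simpa using Real.rpow_le_rpow_of_exponent_le hx1.le hβ1.le
  have hn : ‖x‖ ≤ 1.12 * x 0 := by
    refine abs_le_of_sq_le_sq' ?_ (by positivity) |>.2
    rw [tailNorm_sq_add x]
    nlinarith [tailNorm_nonneg' x]
  have hr : ‖x‖ ^ β ≤ 1.12 * x 0 ^ β := by
    refine (Real.rpow_le_rpow (norm_nonneg _) hn hβ0.le).trans ?_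
    rw [Real.mul_rpow (by norm_num) ha.le]
    have : (1.12 : ℝ) ^ β ≤ 1.12 := by
      simpa using Real.rpow_le_rpow_of_exponent_le (x := (1.12 : ℝ)) (by norm_num) hβ1.le
    gcongr
  have h0 : |(y - x) 0| ≤ ‖y - x‖ := by
    refine abs_le_of_sq_le_sq ?_ (norm_nonneg _)
    rw [tailNorm_sq_add (y - x)]
    nlinarith [sq_nonneg (tailNorm (y - x))]
  have h0' : -‖y - x‖ ≤ y 0 - x 0 := by simpa using (abs_le.mp h0).1
  have hy0 : 0.776 * x 0 ≤ y 0 := by linarith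
  have hyp : 0.776 * x 0 ^ β ≤ y 0 ^ β := by
    refine le_trans ?_ (Real.rpow_le_rpow (by positivity) hy0 hβ0.le)
    rw [Real.mul_rpow (by norm_num) ha.le]
    have : (0.776 : ℝ) ≤ 0.776 ^ β := by
      simpa using Real.rpow_le_rpow_of_exponent_ge (x := (0.776 : ℝ)) (by norm_num) (by norm_num) hβ1.le
    gcongr
  refine ⟨by linarith, ?_⟩
  have := tailNorm_le x y
  linarith
end

section
/- There exists a constant c > 0, depending only on α, β and q, such that for every s ≥ 1, s^{αβ/2} · ∫_s^{s+s^β} t^{-q-1} (t-s)^{-α/2} dt ≤ c · ∫_s^{s+s^β} t^{-q-1} dt. -/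
open MeasureTheory

/-- With `0 < β < 1`, `0 < α < 2` and `q > 0`: there exists a constant `c > 0`,
depending only on `α`, `β` and `q`, such that for every `s ≥ 1`,
`s^{αβ/2} · ∫_s^{s+s^β} t^{-q-1} (t-s)^{-α/2} dt ≤ c · ∫_s^{s+s^β} t^{-q-1} dt`. -/
theorem stmt10 (α β : ℝ) (hα0 : 0 < α) (hα2 : α < 2) (hβ0 : 0 < β) (hβ1 : β < 1)
    (q : ℝ) (hq : 0 < q) :
    ∃ c > (0 : ℝ), ∀ s : ℝ, 1 ≤ s →
      s ^ (α * β / 2) * ∫ t in s..(s + s ^ β), t ^ (-q - 1) * (t - s) ^ (-(α / 2))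
        ≤ c * ∫ t in s..(s + s ^ β), t ^ (-q - 1) := by
  have ha : 0 < 1 - α / 2 := by linarith
  refine ⟨2 ^ (q + 1) / (1 - α / 2), by positivity, fun s hs => ?_⟩
  have hs0 : 0 < s := by linarith
  have hL : 0 < s ^ β := Real.rpow_pos_of_pos hs0 β
  have hL1 : s ^ β ≤ s := by
    simpa using Real.rpow_le_rpow_of_exponent_le hs hβ1.le
  have hle : s ≤ s + s ^ β := by linarith
  have hcont : ContinuousOn (fun t : ℝ => t ^ (-q - 1)) (Set.uIcc s (s + s ^ β)) := by
    rw [Set.uIcc_of_le hle]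
    intro t ht
    have ht0 : t ≠ 0 := by linarith [ht.1]
    exact (Real.continuousAt_rpow_const t _ (Or.inl ht0)).continuousWithinAt
  have hint : IntervalIntegrable (fun t : ℝ => (t - s) ^ (-(α / 2))) volume s (s + s ^ β) := by
    have h := (intervalIntegral.intervalIntegrable_rpow' (a := 0) (b := s ^ β)
      (r := -(α / 2)) (by linarith)).comp_sub_right s
    simpa [add_comm] using h
  have hval : ∫ t in s..(s + s ^ β), (t - s) ^ (-(α / 2))
      = (s ^ β) ^ (1 - α / 2) / (1 - α / 2) := by
    rw [intervalIntegral.integral_comp_sub_right (fun x : ℝ => x ^ (-(α / 2))) s,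
      integral_rpow (Or.inl (by linarith)), sub_self, add_sub_cancel_left,
      show -(α / 2) + 1 = 1 - α / 2 by ring, Real.zero_rpow ha.ne', sub_zero]
  have h1 : ∫ t in s..(s + s ^ β), t ^ (-q - 1) * (t - s) ^ (-(α / 2))
      ≤ s ^ (-q - 1) * ((s ^ β) ^ (1 - α / 2) / (1 - α / 2)) := by
    rw [← hval, ← intervalIntegral.integral_const_mul]
    refine intervalIntegral.integral_mono_on hle (hint.continuousOn_mul hcont)
      (hint.const_mul _) fun t ht => ?_
    refine mul_le_mul_of_nonneg_right ?_ (Real.rpow_nonneg (by linarith [ht.1]) _)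
    exact Real.rpow_le_rpow_of_nonpos hs0 ht.1 (by linarith)
  have h2 : s ^ β * (2 * s) ^ (-q - 1) ≤ ∫ t in s..(s + s ^ β), t ^ (-q - 1) := by
    have h : ∫ t in s..(s + s ^ β), (2 * s) ^ (-q - 1) ≤ ∫ t in s..(s + s ^ β), t ^ (-q - 1) := by
      refine intervalIntegral.integral_mono_on hle (by simp)
        hcont.intervalIntegrable fun t ht => ?_
      exact Real.rpow_le_rpow_of_nonpos (by linarith [ht.1]) (by linarith [ht.2]) (by linarith)
    simpa using h
  have e1 : s ^ (α * β / 2) * (s ^ β) ^ (1 - α / 2) = s ^ β := by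
    rw [← Real.rpow_mul hs0.le, ← Real.rpow_add hs0]
    congr 1
    ring
  have e2 : (2 : ℝ) ^ (q + 1) * (2 * s) ^ (-q - 1) = s ^ (-q - 1) := by
    rw [Real.mul_rpow (by norm_num) hs0.le, ← mul_assoc, ← Real.rpow_add (by norm_num)]
    simp
  calc _ ≤ s ^ (α * β / 2) * (s ^ (-q - 1) * ((s ^ β) ^ (1 - α / 2) / (1 - α / 2))) :=
        mul_le_mul_of_nonneg_left h1 (by positivity)
    _ = (s ^ (α * β / 2) * (s ^ β) ^ (1 - α / 2)) * s ^ (-q - 1) / (1 - α / 2) := by ring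
    _ = 2 ^ (q + 1) / (1 - α / 2) * (s ^ β * (2 * s) ^ (-q - 1)) := by
        rw [e1, ← e2]; ring
    _ ≤ _ := mul_le_mul_of_nonneg_left h2 (by positivity)
end
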